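/- arXiv:2105.07056 — 2 statements merged into one kernel-verified Lean document; each statement's English description precedes it below -/
import Mathlib

section
/- For every even integer N ≥ 2 and every discrete function φ, the discrete inner product satisfies (φ, H_h(S_h³ φ))_h = −2π Σ_{k=−N/2+1}^{N/2−1} |k|³ |φ̂_k|². In particular, for every real μ > 0 the quadratic form φ ↦ Re (φ, μ H_h(S_h³ φ))_h is nonpositive. -/
open scoped BigOperators
open Finset

noncomputable section

/-- Grid spacing `h = 2π/N`. -/
def hgrid (N : ℤ) : ℝ := 2 * Real.pi / N

/-- Grid points `α_j = j h`. -/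
def gridPt (N : ℤ) (j : ℤ) : ℝ := j * hgrid N

/-- Index set `{-N/2+1, …, N/2}`. -/
def idxs (N : ℤ) : Finset ℤ := Finset.Icc (-(N / 2) + 1) (N / 2)

/-- Discrete Fourier coefficient `f̂_k`. -/
def dft (N : ℤ) (f : ℤ → ℂ) (k : ℤ) : ℂ :=
  (N : ℂ)⁻¹ * ∑ j ∈ idxs N, f j * Complex.exp (-(Complex.I * (k : ℂ) * (gridPt N j : ℂ)))

/-- Reconstruction of a discrete function from Fourier coefficients. -/
def idft (N : ℤ) (c : ℤ → ℂ) (j : ℤ) : ℂ :=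
  ∑ k ∈ idxs N, c k * Complex.exp (Complex.I * (k : ℂ) * (gridPt N j : ℂ))

/-- The pseudo-spectral derivative `S_h`. -/
def Sh (N : ℤ) (f : ℤ → ℂ) : ℤ → ℂ :=
  idft N fun k => if k = N / 2 then 0 else Complex.I * (k : ℂ) * dft N f k

/-- The pseudo-spectral antiderivative `S_h⁻¹`. -/
def Shinv (N : ℤ) (f : ℤ → ℂ) : ℤ → ℂ :=
  idft N fun k => if k = 0 then 0 else dft N f k / (Complex.I * (k : ℂ))

/-- The filtered discrete function `f^p`. -/
def filterP (N : ℤ) (ρ : ℝ → ℝ) (f : ℤ → ℂ) : ℤ → ℂ :=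
  idft N fun k => (ρ (gridPt N k) : ℂ) * dft N f k

/-- The filtered derivative `D_h`. -/
def Dh (N : ℤ) (ρ : ℝ → ℝ) (f : ℤ → ℂ) : ℤ → ℂ :=
  idft N fun k => Complex.I * (k : ℂ) * (ρ (gridPt N k) : ℂ) * dft N f k

/-- Discrete `l²` norm. -/
def l2norm (N : ℤ) (f : ℤ → ℂ) : ℝ :=
  Real.sqrt (hgrid N * ∑ j ∈ idxs N, ‖f j‖ ^ 2)

/-- Discrete Hilbert transform `H_h`. -/
def Hh (N : ℤ) (f : ℤ → ℂ) (i : ℤ) : ℂ :=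
  ((hgrid N / Real.pi : ℝ) : ℂ) *
    ∑ j ∈ (idxs N).filter (fun j => Odd (j - i)),
      f j * (Real.cot ((gridPt N i - gridPt N j) / 2) : ℂ)

/-- Discrete inner product `(f,g)_h`. -/
def dip (N : ℤ) (f g : ℤ → ℂ) : ℂ :=
  (hgrid N : ℂ) * ∑ j ∈ idxs N, (starRingEnd ℂ) (f j) * g j

/-- Discrete mean `⟨f⟩_h`. -/
def dmean (N : ℤ) (f : ℤ → ℂ) : ℂ :=
  (N : ℂ)⁻¹ * ∑ j ∈ idxs N, f j

/-- The discrete function of samples of a periodic function. -/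
def samples (N : ℤ) (f : ℝ → ℂ) : ℤ → ℂ := fun j => f (gridPt N j)

/-- Fourier coefficient of a `2π`-periodic function. -/
def fourierCoeffP (f : ℝ → ℂ) (k : ℤ) : ℂ :=
  ((2 * Real.pi)⁻¹ : ℝ) * ∫ α in (-Real.pi)..Real.pi, f α * Complex.exp (-(Complex.I * (k : ℂ) * (α : ℂ)))

/-- Sobolev norm `‖f‖_s`. -/
def sobolevNorm (s : ℕ) (f : ℝ → ℂ) : ℝ :=
  Real.sqrt (∑' k : ℤ, (1 + (k : ℝ) ^ 2) ^ s * ‖fourierCoeffP f k‖ ^ 2)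

/-- A filter (cutoff) function for numerical filtering. -/
structure IsFilter (ρ : ℝ → ℝ) : Prop where
  even : ∀ x, ρ (-x) = ρ x
  nonneg : ∀ x, 0 ≤ ρ x
  smooth : ∃ r : ℕ, 2 < r ∧ ContDiff ℝ r ρ
  zero_at_pi : ρ Real.pi = 0
  zero_at_neg_pi : ρ (-Real.pi) = 0
  deriv_zero_at_pi : deriv ρ Real.pi = 0
  deriv_zero_at_neg_pi : deriv ρ (-Real.pi) = 0
  one_near_zero : ∃ μ : ℝ, 0 < μ ∧ μ < 1 ∧ ∀ x : ℝ, |x| ≤ μ * Real.pi → ρ x = 1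

/-!
Every operator involved is a Fourier multiplier. A geometric sum shows that the inverse transform
of `-i sgn k` (with the Nyquist mode `k = N/2` removed) vanishes at even lags and equals
`2 cot(α/2)` at odd ones, so `H_h` has symbol `-i sgn k`. As `S_h³` has symbol `(ik)³`, the product
of the two is `-i sgn k · (ik)³ = -|k|³`, and Parseval's identity gives the quadratic form.
-/

/-- The basic grid exponential `e^{ih}`, an `N`-th root of unity; `e^{ikα_j}` is its power with
exponent `k * j`. -/
def gridRoot (N : ℤ) : ℂ := Complex.exp (Complex.I * (hgrid N : ℂ))

/-- The Fourier multiplier `-i sgn k` of the discrete Hilbert transform, set to `0` on the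
Nyquist mode `k = N/2`. -/
def hilbertSymbol (N k : ℤ) : ℂ := if k = N / 2 then 0 else -(Complex.I * (k.sign : ℂ))

lemma one_sub_mul_sum_Ico_zpow {K : Type*} [Field K] {w : K} (hw : w ≠ 0) {a b : ℤ}
    (hab : a ≤ b) : (1 - w) * ∑ k ∈ Ico a b, w ^ k = w ^ a - w ^ b := by
  induction b, hab using Int.leInduction with
  | base => simp
  | succ b hab ih =>
    rw [← insert_Ico_right_eq_Ico_add_one hab, sum_insert right_notMem_Ico, mul_add, ih,
      zpow_add_one₀ hw]
    ring

lemma sum_Icc_sign_mul {R : Type*} [Ring R] (m : ℤ) (f : ℤ → R) :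
    ∑ k ∈ Icc (-m + 1) (m - 1), (k.sign : R) * f k = ∑ k ∈ Ico 1 m, (f k - f (-k)) := by
  have hsign (k : ℤ) :
      (k.sign : R) * f k = (if 0 < k then f k else 0) - if k < 0 then f k else 0 := by
    rcases lt_trichotomy k 0 with hk | rfl | hk
    · simp [Int.sign_eq_neg_one_of_neg hk, hk, hk.not_gt]
    · simp
    · simp [Int.sign_eq_one_of_pos hk, hk, hk.not_gt]
  have hpos : {k ∈ Icc (-m + 1) (m - 1) | 0 < k} = Ico 1 m := by
    ext k
    simp only [mem_filter, mem_Icc, mem_Ico]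
    lia
  have hneg : {k ∈ Icc (-m + 1) (m - 1) | k < 0} = (Ico 1 m).map (Equiv.neg ℤ).toEmbedding := by
    ext k
    simp only [mem_filter, mem_Icc, mem_map_equiv, Equiv.neg_symm, Equiv.neg_apply, mem_Ico]
    lia
  simp only [hsign, sum_sub_distrib, ← sum_filter, hpos, hneg, sum_map, Equiv.coe_toEmbedding,
    Equiv.neg_apply]

lemma one_sub_mul_sum_Icc_sign_mul_zpow {K : Type*} [Field K] {w : K} (hw : w ≠ 0) {m : ℤ}
    (hm : 1 ≤ m) :
    (1 - w) * ∑ k ∈ Icc (-m + 1) (m - 1), (k.sign : K) * w ^ k =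
      1 + w - w ^ m - w * w ^ (-m) := by
  have hpos := one_sub_mul_sum_Ico_zpow hw hm
  have hneg := one_sub_mul_sum_Ico_zpow (inv_ne_zero hw) hm
  rw [sum_Icc_sign_mul, sum_sub_distrib, mul_sub, hpos]
  simp only [zpow_one, inv_zpow', zpow_neg] at hneg ⊢
  field_simp at hneg ⊢
  linear_combination hneg

lemma gridRoot_ne_zero (N : ℤ) : gridRoot N ≠ 0 := Complex.exp_ne_zero _

lemma gridRoot_zpow_eq_exp (N n : ℤ) :
    gridRoot N ^ n = Complex.exp (Complex.I * (gridPt N n : ℂ)) := by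
  rw [gridRoot, ← Complex.exp_int_mul, gridPt]
  push_cast
  ring_nf

lemma exp_gridPt (N k j : ℤ) :
    Complex.exp (Complex.I * (k : ℂ) * (gridPt N j : ℂ)) = gridRoot N ^ (k * j) := by
  rw [gridRoot_zpow_eq_exp, gridPt, gridPt]
  push_cast
  ring_nf

lemma exp_neg_gridPt (N k j : ℤ) :
    Complex.exp (-(Complex.I * (k : ℂ) * (gridPt N j : ℂ))) = gridRoot N ^ (-(k * j)) := by
  rw [Complex.exp_neg, exp_gridPt, zpow_neg]

lemma conj_gridRoot_zpow (N n : ℤ) :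
    (starRingEnd ℂ) (gridRoot N ^ n) = gridRoot N ^ (-n) := by
  rw [zpow_neg, gridRoot_zpow_eq_exp, ← Complex.exp_conj, ← Complex.exp_neg]
  simp

lemma gridRoot_zpow_eq_one_iff {N : ℤ} (hN : N ≠ 0) {n : ℤ} : gridRoot N ^ n = 1 ↔ N ∣ n := by
  have hN' : (N : ℂ) ≠ 0 := by exact_mod_cast hN
  have harg (m : ℤ) : Complex.I * (gridPt N n : ℂ) = m * (2 * Real.pi * Complex.I) ↔ n = N * m := by
    rw [gridPt, hgrid, ← @Int.cast_inj ℂ]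
    push_cast
    field_simp
  simp only [gridRoot_zpow_eq_exp, Complex.exp_eq_one_iff, harg, Dvd.dvd]

lemma gridRoot_zpow_half {N : ℤ} (hN : N ≠ 0) (hNe : Even N) : gridRoot N ^ (N / 2) = -1 := by
  have hN' : (N : ℝ) ≠ 0 := by exact_mod_cast hN
  have hcast : ((N / 2 : ℤ) : ℝ) = N / 2 := by rw [Int.cast_div hNe.two_dvd (by simp), Int.cast_two]
  have hpi : gridPt N (N / 2) = Real.pi := by
    rw [gridPt, hgrid, hcast]
    field_simp
  rw [gridRoot_zpow_eq_exp, hpi, mul_comm, Complex.exp_pi_mul_I]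

lemma ofReal_cot_gridPt_div_two (N n : ℤ) :
    (Real.cot (gridPt N n / 2) : ℂ) =
      (gridRoot N ^ n + 1) / (Complex.I * (1 - gridRoot N ^ n)) := by
  rw [Complex.ofReal_cot, Complex.cot_eq_exp_ratio, gridRoot_zpow_eq_exp]
  push_cast
  ring_nf

lemma sum_idxs_gridRoot_zpow {N : ℤ} (hN : 0 < N) (hNe : Even N) (n : ℤ) :
    ∑ j ∈ idxs N, gridRoot N ^ (n * j) = if N ∣ n then (N : ℂ) else 0 := by
  have hidxs : idxs N = Ico (-(N / 2) + 1) (-(N / 2) + 1 + N) := by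
    have := Int.two_mul_ediv_two_of_even hNe
    ext j
    simp only [idxs, mem_Icc, mem_Ico]
    lia
  simp only [hidxs, zpow_mul]
  split_ifs with hn
  · rw [(gridRoot_zpow_eq_one_iff hN.ne').2 hn]
    simp only [one_zpow, sum_const, Int.card_Ico, add_sub_cancel_left, nsmul_eq_mul, mul_one]
    exact_mod_cast Int.toNat_of_nonneg hN.le
  · have hw : 1 - gridRoot N ^ n ≠ 0 :=
      sub_ne_zero.2 fun h => hn ((gridRoot_zpow_eq_one_iff hN.ne').1 h.symm)
    have hwN : (gridRoot N ^ n) ^ N = 1 := by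
      rw [← zpow_mul, gridRoot_zpow_eq_one_iff hN.ne']
      exact dvd_mul_left N n
    have hw0 := zpow_ne_zero n (gridRoot_ne_zero N)
    refine (mul_eq_zero.1 ?_).resolve_left hw
    rw [one_sub_mul_sum_Ico_zpow hw0 (by lia), zpow_add₀ hw0 _ N, hwN, mul_one, sub_self]

lemma dft_idft {N : ℤ} (hN : 0 < N) (hNe : Even N) (c : ℤ → ℂ) {k : ℤ} (hk : k ∈ idxs N) :
    dft N (idft N c) k = c k := by
  have hN' : (N : ℂ) ≠ 0 := by exact_mod_cast hN.ne'
  have hterm (l j : ℤ) : c l * gridRoot N ^ (l * j) * gridRoot N ^ (-(k * j)) =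
      c l * gridRoot N ^ ((l - k) * j) := by
    rw [mul_assoc, ← zpow_add₀ (gridRoot_ne_zero N), ← sub_eq_add_neg, sub_mul]
  have hdvd : ∀ l ∈ idxs N, N ∣ l - k ↔ l = k := fun l hl => by
    simp only [idxs, mem_Icc] at hk hl
    refine ⟨fun h => sub_eq_zero.1 (Int.eq_zero_of_abs_lt_dvd h ?_), fun h => by simp [h]⟩
    rw [abs_lt]
    lia
  simp only [dft, idft, exp_gridPt, exp_neg_gridPt, sum_mul, hterm]
  rw [sum_comm]
  simp only [← mul_sum, sum_idxs_gridRoot_zpow hN hNe]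
  rw [sum_congr rfl fun l hl => by rw [if_congr (hdvd l hl) rfl rfl]]
  simp [hk, mul_comm, hN']

lemma idft_mul_dft_eq_convolution (N : ℤ) (c f : ℤ → ℂ) (i : ℤ) :
    idft N (fun k => c k * dft N f k) i =
      (N : ℂ)⁻¹ * ∑ j ∈ idxs N, f j * idft N c (i - j) := by
  simp only [idft, dft, exp_gridPt, exp_neg_gridPt, mul_sum, sum_mul]
  rw [sum_comm]
  refine sum_congr rfl fun j _ => sum_congr rfl fun k _ => ?_
  rw [mul_sub, sub_eq_add_neg, zpow_add₀ (gridRoot_ne_zero N)]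
  ring

lemma dip_idft (N : ℤ) (f c : ℤ → ℂ) :
    dip N f (idft N c) =
      2 * Real.pi * ∑ k ∈ idxs N, (starRingEnd ℂ) (dft N f k) * c k := by
  simp only [dip, dft, idft, hgrid, exp_gridPt, exp_neg_gridPt, map_mul, map_sum, map_inv₀,
    conj_gridRoot_zpow, neg_neg, mul_sum, sum_mul]
  rw [sum_comm]
  refine sum_congr rfl fun k _ => sum_congr rfl fun j _ => ?_
  push_cast
  simp only [map_intCast]
  ring

lemma dip_const_mul (N : ℤ) (f g : ℤ → ℂ) (c : ℂ) :
    dip N f (fun j => c * g j) = c * dip N f g := by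
  simp only [dip, mul_sum]
  exact sum_congr rfl fun j _ => by ring

lemma dft_iterate_Sh {N : ℤ} (hN : 0 < N) (hNe : Even N) (n : ℕ) (f : ℤ → ℂ) {k : ℤ}
    (hk : k ∈ Icc (-(N / 2) + 1) (N / 2 - 1)) :
    dft N ((Sh N)^[n] f) k = (Complex.I * k) ^ n * dft N f k := by
  have hk_idxs : k ∈ idxs N := by
    simp only [idxs, mem_Icc] at hk ⊢
    lia
  have hk_ne : k ≠ N / 2 := by
    simp only [mem_Icc] at hk
    lia
  induction n with
  | zero => simp
  | succ n ih =>
    rw [Function.iterate_succ_apply', Sh, dft_idft hN hNe _ hk_idxs, if_neg hk_ne, ih]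
    ring

lemma sum_idxs_hilbertSymbol_mul (N : ℤ) (F : ℤ → ℂ) :
    ∑ k ∈ idxs N, hilbertSymbol N k * F k =
      -(Complex.I * ∑ k ∈ Icc (-(N / 2) + 1) (N / 2 - 1), (k.sign : ℂ) * F k) := by
  have hIcc : Icc (-(N / 2) + 1) (N / 2 - 1) = {k ∈ idxs N | k ≠ N / 2} := by
    ext k
    simp only [idxs, mem_filter, mem_Icc]
    lia
  rw [hIcc, sum_filter, mul_sum, ← sum_neg_distrib]
  refine sum_congr rfl fun k _ => ?_
  by_cases hk : k = N / 2
  · simp [hilbertSymbol, hk]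
  · simp [hilbertSymbol, hk, mul_assoc]

lemma idft_hilbertSymbol {N : ℤ} (hN : 0 < N) (hNe : Even N) (n : ℤ) :
    idft N (hilbertSymbol N) n = if Odd n then 2 * (Real.cot (gridPt N n / 2) : ℂ) else 0 := by
  have hw0 := zpow_ne_zero n (gridRoot_ne_zero N)
  have hhalf : (gridRoot N ^ n) ^ (N / 2) = (-1) ^ n := by
    rw [← zpow_mul, mul_comm, zpow_mul, gridRoot_zpow_half hN.ne' hNe]
  have hhalf_pos : 1 ≤ N / 2 := by
    have := Int.two_mul_ediv_two_of_even hNe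
    lia
  have hw_odd : gridRoot N ^ n = 1 → ¬ Odd n := fun h => by
    rw [Int.not_odd_iff_even]
    exact hNe.trans_dvd ((gridRoot_zpow_eq_one_iff hN.ne').1 h)
  simp only [idft, exp_gridPt, mul_comm _ n, zpow_mul, ofReal_cot_gridPt_div_two,
    sum_idxs_hilbertSymbol_mul]
  generalize gridRoot N ^ n = w at *
  by_cases hw : w = 1
  · rw [if_neg (hw_odd hw), sum_Icc_sign_mul]
    simp [hw]
  · have hw' : 1 - w ≠ 0 := sub_ne_zero.2 (Ne.symm hw)
    have hgeom := one_sub_mul_sum_Icc_sign_mul_zpow hw0 hhalf_pos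
    rw [zpow_neg, hhalf] at hgeom
    split_ifs with hn
    · rw [hn.neg_one_zpow] at hgeom
      field_simp
      rw [Complex.I_sq]
      linear_combination hgeom
    · rw [(Int.not_odd_iff_even.1 hn).neg_one_zpow] at hgeom
      have hzero := (mul_eq_zero.1 (hgeom.trans (by ring))).resolve_left hw'
      rw [hzero, mul_zero, neg_zero]

lemma Hh_eq_idft {N : ℤ} (hN : 0 < N) (hNe : Even N) (f : ℤ → ℂ) :
    Hh N f = idft N fun k => hilbertSymbol N k * dft N f k := by
  funext i
  have hstep : ((hgrid N / Real.pi : ℝ) : ℂ) = (N : ℂ)⁻¹ * 2 := by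
    have hpi : (Real.pi : ℂ) ≠ 0 := by exact_mod_cast Real.pi_ne_zero
    rw [hgrid]
    push_cast
    field_simp
  have hdiff (j : ℤ) : gridPt N i - gridPt N j = gridPt N (i - j) := by
    simp only [gridPt]
    push_cast
    ring
  have hodd (j : ℤ) : Odd (i - j) ↔ Odd (j - i) := by rw [← neg_sub, odd_neg]
  rw [idft_mul_dft_eq_convolution, Hh, hstep, mul_assoc, sum_filter, mul_sum]
  congr 1
  refine sum_congr rfl fun j _ => ?_
  rw [idft_hilbertSymbol hN hNe, hdiff, if_congr (hodd j) rfl rfl]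
  split_ifs
  · ring
  · ring

lemma dip_Hh {N : ℤ} (hN : 0 < N) (hNe : Even N) (f g : ℤ → ℂ) :
    dip N f (Hh N g) = -(2 * Real.pi * Complex.I *
      ∑ k ∈ Icc (-(N / 2) + 1) (N / 2 - 1),
        (k.sign : ℂ) * ((starRingEnd ℂ) (dft N f k) * dft N g k)) := by
  rw [Hh_eq_idft hN hNe, dip_idft]
  simp only [mul_left_comm _ (hilbertSymbol N _), sum_idxs_hilbertSymbol_mul]
  ring

lemma I_mul_sign_mul_I_mul_pow_three (k : ℤ) :
    Complex.I * (k.sign * (Complex.I * k) ^ 3) = ((|(k : ℝ)| ^ 3 : ℝ) : ℂ) := by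
  have hsign : (k.sign : ℂ) * k = ((|(k : ℝ)| : ℝ) : ℂ) := by
    exact_mod_cast congrArg (Int.cast : ℤ → ℂ) (Int.sign_mul_self_eq_abs k)
  have hsq : ((|(k : ℝ)| : ℝ) : ℂ) ^ 2 = (k : ℂ) ^ 2 := by
    exact_mod_cast congrArg Complex.ofReal (sq_abs (k : ℝ))
  calc Complex.I * (k.sign * (Complex.I * k) ^ 3)
      = (Complex.I ^ 2) ^ 2 * (k ^ 2 * (k.sign * k)) := by ring
    _ = ((|(k : ℝ)| ^ 3 : ℝ) : ℂ) := by
      rw [Complex.I_sq, hsign, ← hsq]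
      push_cast
      ring

lemma dip_Hh_iterate_Sh_three {N : ℤ} (hN : 0 < N) (hNe : Even N) (φ : ℤ → ℂ) :
    dip N φ (Hh N ((Sh N)^[3] φ)) =
      ((-(2 * Real.pi * ∑ k ∈ Icc (-(N / 2) + 1) (N / 2 - 1),
        |(k : ℝ)| ^ 3 * ‖dft N φ k‖ ^ 2) : ℝ) : ℂ) := by
  rw [dip_Hh hN hNe, mul_assoc, mul_sum]
  push_cast
  congr 2
  refine sum_congr rfl fun k hk => ?_
  have hsymbol := I_mul_sign_mul_I_mul_pow_three k
  push_cast at hsymbol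
  rw [dft_iterate_Sh hN hNe 3 φ hk, ← Complex.conj_mul']
  linear_combination (starRingEnd ℂ) (dft N φ k) * dft N φ k * hsymbol

/-- equation (8.1) / parabolic smoothing: spectral formula for the
quadratic form `(φ, H_h S_h³ φ)_h` and its nonpositivity. -/
theorem parabolic_smoothing_quadratic_form (N : ℤ) (hN : 2 ≤ N) (hNe : Even N)
    (φ : ℤ → ℂ) :
    dip N φ (Hh N ((Sh N)^[3] φ)) =
      -(((2 * Real.pi : ℝ) : ℂ) * ∑ k ∈ Finset.Icc (-(N / 2) + 1) (N / 2 - 1),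
        (((|k| : ℝ) ^ 3 * ‖dft N φ k‖ ^ 2 : ℝ) : ℂ)) ∧
    ∀ μ : ℝ, 0 < μ →
      (dip N φ (fun i => ((μ : ℝ) : ℂ) * Hh N ((Sh N)^[3] φ) i)).re ≤ 0 := by
  have hN0 : 0 < N := by lia
  refine ⟨?_, fun μ hμ => ?_⟩
  · rw [dip_Hh_iterate_Sh_three hN0 hNe]
    push_cast
    rfl
  · rw [dip_const_mul, dip_Hh_iterate_Sh_three hN0 hNe, Complex.re_ofReal_mul, Complex.ofReal_re,
      mul_neg, neg_nonpos]
    have := Real.pi_pos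
    positivity

end
end

section
/- There is a universal constant c > 0 such that for every even integer N ≥ 2 (with h = 2π/N) and every discrete function φ with φ̂_{N/2} = 0, extended N-periodically in its index, and for all integers i and j, |φ_j − φ_i| ≤ c h^{−1/2} |α_j − α_i| ‖S_h φ‖_{l²}, where α_j = jh for all j ∈ ℤ. -/
open scoped BigOperators
open Finset

noncomputable section

/-!
The Fourier mode `e^{ikα}` is `|k|`-Lipschitz in `α`, so the slope of `φ` between any two grid
points is at most `∑ |k| |φ̂_k|`, the `ℓ¹` norm of the Fourier coefficients of `S_h φ`. By
Cauchy–Schwarz over the `N` frequencies and Parseval's identity this is at most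
`(∑ |(S_h φ)_j|²)^{1/2} = h^{-1/2} ‖S_h φ‖_{l²}`, so `c = 1` works.

The symmetric index set `{-N/2+1, …, N/2}` is the range of `ZMod.valMinAbs` when `N` is even, which
reduces inversion and Parseval to Mathlib's discrete Fourier transform on `ZMod N`.
-/

open scoped ZMod

section Plancherel

variable {N : ℕ} [NeZero N] {E : Type*} [NormedAddCommGroup E] [InnerProductSpace ℂ E]

theorem sum_inner_zmodDFT_left (Φ Ψ : ZMod N → E) :
    ∑ k, inner ℂ (𝓕 Φ k) (Ψ k) = ∑ j, inner ℂ (Φ j) (𝓕 Ψ (-j)) := by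
  simp only [ZMod.dft_apply, sum_inner, inner_sum, inner_smul_left, inner_smul_right,
    ← AddChar.map_neg_eq_conj, neg_neg, mul_neg]
  rw [sum_comm]
  simp only [mul_comm]

theorem sum_inner_zmodDFT_zmodDFT (Φ Ψ : ZMod N → E) :
    ∑ k, inner ℂ (𝓕 Φ k) (𝓕 Ψ k) = N * ∑ j, inner ℂ (Φ j) (Ψ j) := by
  simp only [sum_inner_zmodDFT_left, ZMod.dft_dft, neg_neg, inner_smul_right, mul_sum]

theorem sum_norm_zmodDFT_sq (Φ : ZMod N → E) :
    ∑ k, ‖𝓕 Φ k‖ ^ 2 = N * ∑ j, ‖Φ j‖ ^ 2 := by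
  have h := sum_inner_zmodDFT_zmodDFT Φ Φ
  simp only [inner_self_eq_norm_sq_to_K] at h
  apply Complex.ofReal_injective
  push_cast
  exact h

end Plancherel

theorem apply_valMinAbs_intCast_of_periodic {α : Type*} {N : ℕ} {φ : ℤ → α}
    (hφ : Function.Periodic φ (N : ℤ)) (j : ℤ) : φ (j : ZMod N).valMinAbs = φ j := by
  obtain ⟨t, ht⟩ : (N : ℤ) ∣ j - (j : ZMod N).valMinAbs :=
    (ZMod.intCast_eq_intCast_iff_dvd_sub _ _ N).1 (ZMod.coe_valMinAbs _)
  have hj : j = (j : ZMod N).valMinAbs + t * N := by linear_combination ht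
  conv_rhs => rw [hj]
  exact (hφ.int_mul t _).symm

theorem norm_exp_I_mul_sub_exp_I_mul_le (x y : ℝ) :
    ‖Complex.exp (Complex.I * x) - Complex.exp (Complex.I * y)‖ ≤ |x - y| := by
  have h : Complex.exp (Complex.I * x) - Complex.exp (Complex.I * y) =
      Complex.exp (Complex.I * y) * (Complex.exp (Complex.I * (x - y : ℝ)) - 1) := by
    rw [mul_sub, ← Complex.exp_add, mul_one]
    push_cast
    ring_nf
  rw [h, norm_mul, Complex.norm_exp_I_mul_ofReal, one_mul]
  exact Real.norm_exp_I_mul_ofReal_sub_one_le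

theorem norm_idft_sub_idft_le (N : ℤ) (c : ℤ → ℂ) (i j : ℤ) :
    ‖idft N c j - idft N c i‖ ≤
      |gridPt N j - gridPt N i| * ∑ k ∈ idxs N, ‖Complex.I * k * c k‖ := by
  rw [idft, idft, ← sum_sub_distrib, mul_sum]
  refine norm_sum_le_of_le _ fun k _ => ?_
  have hexp : ‖Complex.exp (Complex.I * k * gridPt N j) -
      Complex.exp (Complex.I * k * gridPt N i)‖ ≤ |(k : ℝ)| * |gridPt N j - gridPt N i| := by
    rw [← abs_mul, mul_sub]
    simpa [mul_assoc] using
      norm_exp_I_mul_sub_exp_I_mul_le (k * gridPt N j) (k * gridPt N i)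
  calc ‖c k * Complex.exp (Complex.I * k * gridPt N j) -
          c k * Complex.exp (Complex.I * k * gridPt N i)‖
      ≤ ‖c k‖ * (|(k : ℝ)| * |gridPt N j - gridPt N i|) := by
        rw [← mul_sub, norm_mul]
        gcongr
    _ = |gridPt N j - gridPt N i| * ‖Complex.I * k * c k‖ := by
        rw [norm_mul, norm_mul, Complex.norm_I, Complex.norm_intCast]
        ring

theorem hgrid_pos {N : ℤ} (hN : 0 < N) : 0 < hgrid N :=
  div_pos Real.two_pi_pos (Int.cast_pos.2 hN)

theorem Sh_eq_idft {N : ℤ} {φ : ℤ → ℂ} (hφ : dft N φ (N / 2) = 0) :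
    Sh N φ = idft N fun k => Complex.I * k * dft N φ k := by
  have hcoeff (k : ℤ) : (if k = N / 2 then 0 else Complex.I * k * dft N φ k) =
      Complex.I * k * dft N φ k := by
    split_ifs with hk
    · rw [hk, hφ, mul_zero]
    · rfl
  simp only [Sh, hcoeff]

section Grid

variable {N : ℕ} [NeZero N]

theorem exp_gridPt_eq_stdAddChar (k j : ℤ) :
    Complex.exp (Complex.I * k * gridPt N j) = ZMod.stdAddChar (k * j : ZMod N) := by
  rw [← Int.cast_mul, ZMod.stdAddChar_coe, gridPt, hgrid]
  congr 1
  push_cast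
  ring

theorem sum_idxs_eq_sum_valMinAbs (hN : Even N) {M : Type*} [AddCommMonoid M] (f : ℤ → M) :
    ∑ j ∈ idxs N, f j = ∑ x : ZMod N, f x.valMinAbs := by
  obtain ⟨n, hn⟩ := hN
  have hright : ∀ j ∈ idxs N, (j : ZMod N).valMinAbs = j := fun j hj =>
    (ZMod.valMinAbs_spec _ j).2 ⟨rfl, by
      simp only [idxs, mem_Icc] at hj
      constructor <;> lia⟩
  refine sum_nbij' (fun j => (j : ZMod N)) ZMod.valMinAbs (fun _ _ => mem_univ _)
    (fun x _ => ?_) hright (fun x _ => x.coe_valMinAbs) fun j hj => by rw [hright j hj]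
  obtain ⟨hlower, hupper⟩ := x.valMinAbs_mem_Ioc
  simp only [idxs, mem_Icc]
  lia

theorem card_idxs (hN : Even N) : #(idxs N) = N := by
  rw [card_eq_sum_ones, sum_idxs_eq_sum_valMinAbs hN, ← card_eq_sum_ones, card_univ, ZMod.card]

theorem dft_eq_zmodDFT (hN : Even N) (f : ℤ → ℂ) (k : ℤ) :
    dft N f k = (N : ℂ)⁻¹ * 𝓕 (fun x : ZMod N => f x.valMinAbs) k := by
  simp only [dft, Complex.exp_neg, exp_gridPt_eq_stdAddChar, sum_idxs_eq_sum_valMinAbs hN,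
    ZMod.coe_valMinAbs, ZMod.dft_apply, AddChar.map_neg_eq_inv, smul_eq_mul, Int.cast_natCast]
  simp only [mul_comm]

theorem idft_eq_zmodDFT_neg (hN : Even N) (c : ℤ → ℂ) (j : ℤ) :
    idft N c j = 𝓕 (fun x : ZMod N => c x.valMinAbs) (-j) := by
  simp only [idft, exp_gridPt_eq_stdAddChar, sum_idxs_eq_sum_valMinAbs hN, ZMod.coe_valMinAbs,
    ZMod.dft_apply, mul_neg, neg_neg, smul_eq_mul, mul_comm]

theorem idft_dft (hN : Even N) {φ : ℤ → ℂ} (hφ : Function.Periodic φ (N : ℤ)) :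
    idft N (dft N φ) = φ := by
  funext j
  simp only [idft_eq_zmodDFT_neg hN, dft_eq_zmodDFT hN, ZMod.coe_valMinAbs, ZMod.dft_const_mul,
    ZMod.dft_dft, neg_neg, smul_eq_mul, apply_valMinAbs_intCast_of_periodic hφ]
  exact inv_mul_cancel_left₀ (NeZero.ne _) _

theorem sum_norm_idft_sq (hN : Even N) (c : ℤ → ℂ) :
    ∑ j ∈ idxs N, ‖idft N c j‖ ^ 2 = N * ∑ k ∈ idxs N, ‖c k‖ ^ 2 := by
  simp only [idft_eq_zmodDFT_neg hN, sum_idxs_eq_sum_valMinAbs hN, ZMod.coe_valMinAbs]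
  rw [← sum_norm_zmodDFT_sq]
  exact Equiv.sum_comp (Equiv.neg (ZMod N))
    fun x => ‖𝓕 (fun y : ZMod N => c y.valMinAbs) x‖ ^ 2

theorem sum_norm_le_l2norm_idft (hN : Even N) (c : ℤ → ℂ) :
    ∑ k ∈ idxs N, ‖c k‖ ≤ hgrid N ^ (-(1 / 2) : ℝ) * l2norm N (idft N c) := by
  have hh : 0 < hgrid N := hgrid_pos (Int.natCast_pos.2 (NeZero.pos N))
  calc ∑ k ∈ idxs N, ‖c k‖
      ≤ √(#(idxs N) * ∑ k ∈ idxs N, ‖c k‖ ^ 2) := Real.le_sqrt_of_sq_le sq_sum_le_card_mul_sum_sq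
    _ = √(∑ j ∈ idxs N, ‖idft N c j‖ ^ 2) := by rw [sum_norm_idft_sq hN, card_idxs hN]
    _ = hgrid N ^ (-(1 / 2) : ℝ) * l2norm N (idft N c) := by
        rw [l2norm, Real.rpow_neg hh.le, ← Real.sqrt_eq_rpow, Real.sqrt_mul hh.le,
          inv_mul_cancel_left₀ (Real.sqrt_ne_zero'.2 hh)]

end Grid

/-- appendix estimate (A.3): a discrete Lipschitz bound for a
discrete function in terms of the `l²` norm of its pseudo-spectral derivative. -/
theorem discrete_lipschitz_bound :
    ∃ c : ℝ, 0 < c ∧ ∀ N : ℤ, 2 ≤ N → Even N → ∀ φ : ℤ → ℂ,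
      (∀ j : ℤ, φ (j + N) = φ j) → dft N φ (N / 2) = 0 →
      ∀ i j : ℤ,
        ‖φ j - φ i‖ ≤
          c * hgrid N ^ (-(1 / 2) : ℝ) * |gridPt N j - gridPt N i| *
            l2norm N (Sh N φ) := by
  refine ⟨1, one_pos, fun N hN hNe φ hper hhalf i j => ?_⟩
  lift N to ℕ using by lia
  have : NeZero N := ⟨by lia⟩
  have hEven : Even N := by exact_mod_cast hNe
  calc ‖φ j - φ i‖
      = ‖idft N (dft N φ) j - idft N (dft N φ) i‖ := by rw [idft_dft hEven hper]
    _ ≤ |gridPt N j - gridPt N i| * ∑ k ∈ idxs N, ‖Complex.I * k * dft N φ k‖ :=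
        norm_idft_sub_idft_le N (dft N φ) i j
    _ ≤ |gridPt N j - gridPt N i| * (hgrid N ^ (-(1 / 2) : ℝ) * l2norm N (Sh N φ)) := by
        rw [Sh_eq_idft hhalf]
        gcongr
        exact sum_norm_le_l2norm_idft hEven _
    _ = 1 * hgrid N ^ (-(1 / 2) : ℝ) * |gridPt N j - gridPt N i| * l2norm N (Sh N φ) := by ring

end
end
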